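/- arXiv:1506.03432 — 2 statements merged into one kernel-verified Lean document; each statement's English description precedes it below -/
import Mathlib

section
/- No cardinal κ is 1-hyper^κ-inaccessible (where κ is identified with its initial ordinal). -/
/-- `κ` is `α`-hyper^`β`-inaccessible: (1) `κ` is inaccessible, (2) for every
`η < β` the cardinal `κ` is `κ`-hyper^`η`-inaccessible, and (3) for every
`γ < α` the set of `γ`-hyper^`β`-inaccessible cardinals below `κ` is unbounded
in `κ`.  Defined by recursion, first on `β` and then on `α`. -/
def HyperInacc (β α : Ordinal) (κ : Cardinal) : Prop :=
  κ.IsInaccessible ∧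
    (∀ η < β, HyperInacc η κ.ord κ) ∧
    (∀ γ < α, ∀ θ < κ, ∃ μ, μ < κ ∧ HyperInacc β γ μ ∧ θ < μ)
termination_by (β, α)

namespace HyperInacc

variable {α β γ η : Ordinal} {κ θ : Cardinal}

theorem isInaccessible (h : HyperInacc β α κ) : κ.IsInaccessible := by
  rw [HyperInacc] at h
  exact h.1

theorem hyperInacc_ord_of_lt (h : HyperInacc β α κ) (hη : η < β) : HyperInacc η κ.ord κ := by
  rw [HyperInacc] at h
  exact h.2.1 η hη

theorem exists_mem_Ioo (h : HyperInacc β α κ) (hγ : γ < α) (hθ : θ < κ) :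
    ∃ μ ∈ Set.Ioo θ κ, HyperInacc β γ μ := by
  rw [HyperInacc] at h
  obtain ⟨μ, hμκ, hμ, hθμ⟩ := h.2.2 γ hγ θ hθ
  exact ⟨μ, ⟨hθμ, hμκ⟩, hμ⟩

theorem exists_lt_hyperInacc_ord_ord (h : HyperInacc β α κ) (hα : 0 < α) (hβ : κ.ord ≤ β) :
    ∃ μ < κ, HyperInacc μ.ord μ.ord μ := by
  obtain ⟨μ, ⟨-, hμκ⟩, hμ⟩ := h.exists_mem_Ioo hα h.isInaccessible.pos
  have hμβ : μ.ord < β := (Cardinal.ord_lt_ord.2 hμκ).trans_le hβ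
  exact ⟨μ, hμκ, hμ.hyperInacc_ord_of_lt hμβ⟩

end HyperInacc

theorem not_one_hyper_kappa_inacc_general {α β : Ordinal} {κ : Cardinal} (hα : 0 < α)
    (hβ : κ.ord ≤ β) : ¬ HyperInacc β α κ := by
  induction κ using WellFoundedLT.induction generalizing α β with
  | ind κ ih =>
    intro h
    obtain ⟨μ, hμκ, hμ⟩ := h.exists_lt_hyperInacc_ord_ord hα hβ
    exact ih μ hμκ hμ.isInaccessible.isRegular.ord_pos le_rfl hμ

/-- No cardinal `κ` is `1`-hyper^`κ`-inaccessible (identifying `κ` with its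
initial ordinal). -/
theorem not_one_hyper_kappa_inacc (κ : Cardinal) :
    ¬ HyperInacc κ.ord 1 κ :=
  not_one_hyper_kappa_inacc_general zero_lt_one le_rfl
end

section
/- If κ is a weakly compact cardinal, then κ is α-Mahlo for every ordinal α ≤ κ (where κ is identified with its initial ordinal). -/
/-- `C` is a closed unbounded (club) subset of the ordinal `κ`: it is a set of
ordinals below `κ`, unbounded in `κ`, and contains every `δ < κ` that is a
limit point of `C`. -/
def IsClubIn (C : Set Ordinal) (κ : Ordinal) : Prop :=
  C ⊆ Set.Iio κ ∧
  (∀ θ < κ, ∃ γ ∈ C, θ < γ) ∧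
  (∀ δ, 0 < δ → δ < κ → (∀ θ < δ, ∃ γ ∈ C, θ < γ ∧ γ < δ) → δ ∈ C)

/-- `S` is stationary in the ordinal `κ`: it meets every club subset of `κ`. -/
def IsStationaryIn (S : Set Ordinal) (κ : Ordinal) : Prop :=
  ∀ C : Set Ordinal, IsClubIn C κ → (S ∩ C).Nonempty

/-- A cardinal `κ` is Mahlo if the set of inaccessible cardinals below `κ`
is stationary in `κ`. -/
def IsMahlo (κ : Cardinal) : Prop :=
  IsStationaryIn {γ | ∃ μ : Cardinal, μ.IsInaccessible ∧ μ.ord = γ} κ.ord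

/-- `κ` is `α`-Mahlo: `κ` is Mahlo and, for every `β < α`, the set of `β`-Mahlo
cardinals below `κ` is stationary in `κ`.  Defined by recursion on `α`. -/
def AlphaMahlo (α : Ordinal) (κ : Cardinal) : Prop :=
  IsMahlo κ ∧
    ∀ β < α,
      IsStationaryIn {γ | ∃ μ : Cardinal, AlphaMahlo β μ ∧ μ.ord = γ} κ.ord
termination_by α

universe u

/-- A cardinal `κ` is weakly compact if it is uncountable and satisfies the
partition property `κ → (κ)²₂`: for every coloring of the pairs of ordinals
below `κ` in two colors there is a homogeneous set `H ⊆ κ` of cardinality `κ`. -/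
def IsWeaklyCompactCard (κ : Cardinal.{u}) : Prop :=
  Cardinal.aleph0 < κ ∧
    ∀ f : Ordinal.{u} → Ordinal.{u} → Fin 2,
      ∃ H : Set Ordinal.{u}, H ⊆ Set.Iio κ.ord ∧
        Cardinal.mk H = Cardinal.lift.{u + 1} κ ∧
        ∃ i : Fin 2, ∀ a ∈ H, ∀ b ∈ H, a < b → f a b = i

/-!
The tails of a homogeneous set of size `κ` generate a `κ`-complete filter of unbounded sets. If the
coloring compares `a` and `b` by the lexicographic order of their traces on `κ` many given sets,
then this filter decides each of these sets. For `κ` many given functions, let the filter decide all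
fibers of their compositions. By well-foundedness there is an eventually least unbounded
composition, and pushing the filter forward along it makes each given function constant on almost
all ordinals where it is regressive, as for a normal ultrafilter.

With a suitable choice of functions almost every `a < κ` is then inaccessible and lies in a
prescribed club. Moreover, clubs `C a` in almost every `a` converge to the club of all `ξ` that lie
in almost every `C a`. Hence a stationary set of `κ` meets almost every `C a`, that is, fewer than
`κ` many stationary sets reflect simultaneously to almost every `a`. If `κ` is `β`-Mahlo, this
property reflects in the same way, so that `β`-Mahlo cardinals are stationary below `κ`.
-/

open Set Filter Topology Cardinal Order

theorem eventuallyConst_of_eventually_imp {α : Type*} {F : Filter α} {s : Set α}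
    (h : ∀ᶠ a in F, ∀ᶠ b in F, a ∈ s → b ∈ s) : EventuallyConst s F := by
  rw [eventuallyConst_set, or_iff_not_imp_right]
  intro hs
  obtain ⟨a, ha, has⟩ := (h.and_frequently (not_eventually.1 hs)).exists
  exact ha.mono fun b hb => hb (not_not.1 has)

theorem wellFounded_eventually_lt {α β : Type*} [Preorder β] [WellFoundedLT β] (F : Filter α)
    [F.NeBot] [CountableInterFilter F] :
    WellFounded fun f g : α → β => ∀ᶠ a in F, f a < g a := by
  rw [wellFounded_iff_isEmpty_descending_chain]
  refine ⟨fun ⟨f, hf⟩ => ?_⟩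
  obtain ⟨a, ha⟩ := (eventually_countable_forall.2 hf).exists
  exact not_strictAnti_of_wellFoundedLT (f · a) (strictAnti_nat_of_succ_lt ha)

theorem mk_Iio_ord (κ : Cardinal.{u}) : #(Iio κ.ord) = Cardinal.lift.{u + 1} κ := by
  rw [mk_Iio_ordinal, card_ord]

theorem mk_Iio_lt_lift_iff {κ : Cardinal.{u}} {μ : Ordinal.{u}} :
    #(Iio μ) < Cardinal.lift.{u + 1} κ ↔ μ < κ.ord := by
  rw [mk_Iio_ordinal, lift_lt, lt_ord]

theorem exists_mem_gt_of_mk_eq {κ : Cardinal.{u}} (hκ : ℵ₀ ≤ κ) {H : Set Ordinal.{u}}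
    (hH : #H = Cardinal.lift.{u + 1} κ) {t : Ordinal.{u}} (ht : t < κ.ord) : ∃ a ∈ H, t < a := by
  by_contra! hbound
  have hle : #H ≤ #(Iio (succ t)) :=
    mk_le_mk_of_subset fun a ha => lt_succ_of_le (hbound a ha)
  have hlt : #(Iio (succ t)) < #H :=
    hH ▸ mk_Iio_lt_lift_iff.2 ((Cardinal.isSuccLimit_ord hκ).succ_lt ht)
  exact hle.not_gt hlt

theorem cardinalInterFilter_nhdsLT_ord {κ : Cardinal.{u}} (hκ : κ.IsRegular) :
    CardinalInterFilter (𝓝[<] κ.ord) (Cardinal.lift.{u + 1} κ) where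
  cardinal_sInter_mem S hS hmem := by
    have hbasis := nhdsLT_basis_of_exists_lt ⟨0, hκ.ord_pos⟩
    choose! t htκ ht using fun s hs => hbasis.mem_iff.1 (hmem s hs)
    have hsup : ⨆ s : S, t s < κ.ord := by
      refine Ordinal.lift_iSup_lt_of_lt_cof ?_ fun s => htκ s s.2
      rwa [← Ordinal.lift_cof, hκ.cof_ord, Cardinal.lift_id'.{u, u + 1}]
    have hbdd : BddAbove (range fun s : S => t s) := 
      ⟨κ.ord, forall_mem_range.2 fun s => (htκ s s.2).le⟩
    refine hbasis.mem_iff.2 ⟨_, hsup, fun a ha s hs => ht s hs ⟨?_, ha.2⟩⟩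
    exact (le_ciSup hbdd ⟨s, hs⟩).trans_lt ha.1

/-- A proper `κ`-complete filter of ordinals that concentrates on the final segments of `κ`. -/
structure IsCompleteUniform (κ : Cardinal.{u}) (F : Filter Ordinal.{u}) : Prop where
  neBot : F.NeBot
  le_nhdsLT : F ≤ 𝓝[<] κ.ord
  cardinalInterFilter : CardinalInterFilter F (Cardinal.lift.{u + 1} κ)

namespace IsCompleteUniform

variable {κ : Cardinal.{u}} {F : Filter Ordinal.{u}}

theorem eventually_lt (hF : IsCompleteUniform κ F) : ∀ᶠ a in F, a < κ.ord :=
  hF.le_nhdsLT self_mem_nhdsWithin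

theorem ord_pos (hF : IsCompleteUniform κ F) : 0 < κ.ord :=
  have := hF.neBot
  pos_of_gt hF.eventually_lt.exists.choose_spec

theorem eventually_gt (hF : IsCompleteUniform κ F) {t : Ordinal.{u}} (ht : t < κ.ord) :
    ∀ᶠ a in F, t < a :=
  mem_of_superset (hF.le_nhdsLT (Ioo_mem_nhdsLT ht)) fun _ ha => ha.1

theorem eventually_forall_lt (hF : IsCompleteUniform κ F) {μ : Ordinal.{u}} (hμ : μ < κ.ord)
    {p : Ordinal.{u} → Ordinal.{u} → Prop} (hp : ∀ i < μ, ∀ᶠ a in F, p i a) :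
    ∀ᶠ a in F, ∀ i < μ, p i a :=
  have := hF.cardinalInterFilter
  (eventually_cardinal_ball (mk_Iio_lt_lift_iff.2 hμ)).2 hp

theorem map (hF : IsCompleteUniform κ F) {g : Ordinal.{u} → Ordinal.{u}}
    (hg : Tendsto g F (𝓝[<] κ.ord)) : IsCompleteUniform κ (F.map g) :=
  have := hF.neBot
  have := hF.cardinalInterFilter
  ⟨inferInstance, hg, inferInstance⟩

theorem eventuallyEq_or_tendsto (hF : IsCompleteUniform κ F) {g : Ordinal.{u} → Ordinal.{u}}
    (hgκ : ∀ᶠ a in F, g a < κ.ord) (hg : ∀ d < κ.ord, EventuallyConst (g ⁻¹' {d}) F) :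
    (∃ c < κ.ord, ∀ᶠ a in F, g a = c) ∨ Tendsto g F (𝓝[<] κ.ord) := by
  refine or_iff_not_imp_left.2 fun hconst => ?_
  have hne : ∀ d < κ.ord, ∀ᶠ a in F, g a ≠ d := fun d hd =>
    (eventuallyConst_set.1 (hg d hd)).resolve_left fun h => hconst ⟨d, hd, h⟩
  rw [tendsto_nhdsWithin_iff]
  refine ⟨tendsto_order.2 ⟨fun t ht => ?_, fun t ht => hgκ.mono fun a ha => ha.trans ht⟩, hgκ⟩
  filter_upwards [hF.eventually_forall_lt ht fun d hd => hne d (hd.trans ht), hne t ht]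
    with a hlt hnet
  exact lt_of_le_of_ne (not_lt.1 fun hat => hlt _ hat rfl) hnet.symm

end IsCompleteUniform

namespace IsWeaklyCompactCard

variable {κ : Cardinal.{u}}

theorem exists_homogeneous (h : IsWeaklyCompactCard κ) (R : Ordinal.{u} → Ordinal.{u} → Prop) :
    ∃ H ⊆ Iio κ.ord, #H = Cardinal.lift.{u + 1} κ ∧
      ((∀ a ∈ H, ∀ b ∈ H, a < b → R a b) ∨ ∀ a ∈ H, ∀ b ∈ H, a < b → ¬ R a b) := by
  classical
  obtain ⟨H, hHκ, hH, i, hi⟩ := h.2 fun a b => if R a b then 1 else 0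
  refine ⟨H, hHκ, hH, ?_⟩
  fin_cases i
  · exact .inr fun a ha b hb hab hR => by simpa [hR] using hi a ha b hb hab
  · exact .inl fun a ha b hb hab => by simpa using hi a ha b hb hab

theorem isRegular (h : IsWeaklyCompactCard κ) : κ.IsRegular := by
  refine ⟨h.1.le, ?_⟩
  rw [← Cardinal.lift_le.{u + 1}, Ordinal.lift_cof, ← Ordinal.cof_Iio, le_cof_iff]
  intro s hs
  have hex : ∀ a < κ.ord, ∃ x ∈ Subtype.val '' s, a ≤ x := fun a ha => by
    obtain ⟨x, hxs, hax⟩ := hs ⟨a, ha⟩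
    exact ⟨x, mem_image_of_mem _ hxs, hax⟩
  choose! p hps hp using hex
  obtain ⟨H, hHκ, hH, hconst | hinj⟩ := h.exists_homogeneous fun a b => p a = p b
  · obtain ⟨a, haH, -⟩ := exists_mem_gt_of_mk_eq h.1.le hH (ord_pos.2 (aleph0_pos.trans h.1))
    have hpa : p a < κ.ord := by
      obtain ⟨x, -, hx⟩ := hps a (hHκ haH)
      exact hx ▸ x.2
    obtain ⟨b, hbH, hb⟩ := exists_mem_gt_of_mk_eq h.1.le hH (max_lt (hHκ haH) hpa)
    obtain ⟨hab, hpab⟩ := max_lt_iff.1 hb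
    rw [hconst a haH b hbH hab] at hpab
    exact absurd hpab (hp b (hHκ hbH)).not_gt
  · have hinjOn : InjOn p H := fun a haH b hbH hab => by
      rcases lt_trichotomy a b with hlt | heq | hgt
      · exact absurd hab (hinj a haH b hbH hlt)
      · exact heq
      · exact absurd hab.symm (hinj b hbH a haH hgt)
    calc
      Cardinal.lift.{u + 1} κ = #(p '' H) := by rw [mk_image_eq_of_injOn p H hinjOn, hH]
      _ ≤ #(Subtype.val '' s) := mk_le_mk_of_subset (image_subset_iff.2 fun a ha => hps a (hHκ ha))
      _ ≤ #s := mk_image_le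

theorem exists_filter_homogeneous (h : IsWeaklyCompactCard κ)
    (R : Ordinal.{u} → Ordinal.{u} → Prop) :
    ∃ F, IsCompleteUniform κ F ∧
      ((∀ᶠ a in F, ∀ᶠ b in F, R a b) ∨ ∀ᶠ a in F, ∀ᶠ b in F, ¬ R a b) := by
  obtain ⟨H, hHκ, hH, hR⟩ := h.exists_homogeneous R
  have := cardinalInterFilter_nhdsLT_ord h.isRegular
  have hF : IsCompleteUniform κ (𝓝[<] κ.ord ⊓ 𝓟 H) := by
    refine ⟨?_, inf_le_left, inferInstance⟩
    rw [(nhdsLT_basis_of_exists_lt ⟨0, h.isRegular.ord_pos⟩).inf_principal_neBot_iff]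
    intro t ht
    obtain ⟨a, haH, hta⟩ := exists_mem_gt_of_mk_eq h.1.le hH ht
    exact ⟨a, ⟨hta, hHκ haH⟩, haH⟩
  have hmem : ∀ᶠ a in 𝓝[<] κ.ord ⊓ 𝓟 H, a ∈ H := mem_inf_of_right (mem_principal_self H)
  refine ⟨_, hF, hR.imp (fun hR => ?_) fun hR => ?_⟩ <;>
  · filter_upwards [hmem] with a ha
    filter_upwards [hmem, hF.eventually_gt (hHκ ha)] with b hb hab using hR a ha b hb hab

end IsWeaklyCompactCard

/-- The lexicographic order of the traces `{ξ | a ∈ X ξ}` and `{ξ | b ∈ X ξ}`: `b` enters at the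
first index `ξ` at which they differ. As a coloring of pairs it makes a homogeneous filter decide
the sets `X ξ`. -/
def LexLT {ι α : Type*} [LT ι] (X : ι → Set α) (a b : α) : Prop :=
  ∃ ξ, (∀ η < ξ, (a ∈ X η ↔ b ∈ X η)) ∧ a ∉ X ξ ∧ b ∈ X ξ

namespace LexLT

variable {ι α : Type*} {X : ι → Set α} {a b : α} {ξ : ι}

theorem mem_of_agree [LinearOrder ι] (hab : LexLT X a b) (hagree : ∀ η < ξ, (a ∈ X η ↔ b ∈ X η))
    (ha : a ∈ X ξ) : b ∈ X ξ := by
  obtain ⟨ζ, hζ, haζ, hbζ⟩ := hab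
  rcases lt_trichotomy ξ ζ with hlt | rfl | hgt
  · exact (hζ ξ hlt).1 ha
  · exact absurd ha haζ
  · exact absurd ((hagree ζ hgt).2 hbζ) haζ

theorem mem_of_not_of_agree [LT ι] (hab : ¬ LexLT X a b)
    (hagree : ∀ η < ξ, (a ∈ X η ↔ b ∈ X η)) (hb : b ∈ X ξ) : a ∈ X ξ :=
  not_not.1 fun ha => hab ⟨ξ, hagree, ha, hb⟩

end LexLT

namespace IsCompleteUniform

variable {κ : Cardinal.{u}} {F : Filter Ordinal.{u}}

theorem eventually_eventually_agree (hF : IsCompleteUniform κ F)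
    {X : Ordinal.{u} → Set Ordinal.{u}} {μ : Ordinal.{u}} (hμ : μ < κ.ord)
    (hX : ∀ i < μ, EventuallyConst (X i) F) :
    ∀ᶠ a in F, ∀ᶠ b in F, ∀ i < μ, (a ∈ X i ↔ b ∈ X i) := by
  have hconst : ∀ i < μ, ∃ p : Prop, ∀ᶠ a in F, (a ∈ X i ↔ p) := fun i hi => by
    rcases eventuallyConst_set.1 (hX i hi) with hmem | hnot
    · exact ⟨True, hmem.mono fun a ha => iff_true_intro ha⟩
    · exact ⟨False, hnot.mono fun a ha => iff_false_intro ha⟩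
  choose! p hp using hconst
  have hev := hF.eventually_forall_lt hμ hp
  filter_upwards [hev] with a ha
  filter_upwards [hev] with b hb i hi using (ha i hi).trans (hb i hi).symm

theorem eventuallyConst_of_lexLT (hF : IsCompleteUniform κ F) {X : Ordinal.{u} → Set Ordinal.{u}}
    (hX : (∀ᶠ a in F, ∀ᶠ b in F, LexLT X a b) ∨ ∀ᶠ a in F, ∀ᶠ b in F, ¬ LexLT X a b)
    (ξ : Ordinal.{u}) (hξ : ξ < κ.ord) : EventuallyConst (X ξ) F := by
  induction ξ using WellFoundedLT.induction with
  | _ ξ ih =>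
    have hagree := hF.eventually_eventually_agree hξ fun η hη => ih η hη (hη.trans hξ)
    rcases hX with hlex | hnot
    · refine eventuallyConst_of_eventually_imp ?_
      filter_upwards [hlex, hagree] with a hlexa hagreea
      filter_upwards [hlexa, hagreea] with b using LexLT.mem_of_agree
    · suffices hcompl : EventuallyConst ((X ξ)ᶜ : Set Ordinal.{u}) F by
        rw [eventuallyConst_set] at hcompl ⊢
        rw [or_comm]
        simpa only [mem_compl_iff, not_not] using hcompl
      refine eventuallyConst_of_eventually_imp ?_
      filter_upwards [hnot, hagree] with a hnota hagreea
      filter_upwards [hnota, hagreea] with b hab hagreeab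
      exact mt (LexLT.mem_of_not_of_agree hab hagreeab)

end IsCompleteUniform

namespace IsWeaklyCompactCard

variable {κ : Cardinal.{u}}

theorem exists_filter_eventuallyConst (h : IsWeaklyCompactCard κ) (𝓧 : Set (Set Ordinal.{u}))
    (h𝓧 : #𝓧 ≤ Cardinal.lift.{u + 1} κ) :
    ∃ F, IsCompleteUniform κ F ∧ ∀ X ∈ 𝓧, EventuallyConst X F := by
  rw [← mk_Iio_ord] at h𝓧
  obtain ⟨e⟩ := h𝓧
  have he : Function.Injective fun X => (e X : Ordinal) := Subtype.val_injective.comp e.injective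
  obtain ⟨F, hF, hlex⟩ := h.exists_filter_homogeneous
    (LexLT (Function.extend (fun X => (e X : Ordinal)) Subtype.val fun _ => ∅))
  refine ⟨F, hF, fun X hX => ?_⟩
  have := hF.eventuallyConst_of_lexLT hlex _ (e ⟨X, hX⟩).2
  rwa [he.extend_apply] at this

theorem two_power_lt (h : IsWeaklyCompactCard κ) {ν : Cardinal.{u}} (hν : ν < κ) : 2 ^ ν < κ := by
  by_contra! hκ
  have hνκ : ν.ord < κ.ord := ord_lt_ord.2 hν
  have hle : #(Iio κ.ord) ≤ #(𝒫 (Iio ν.ord)) := by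
    rwa [mk_powerset, mk_Iio_ord, mk_Iio_ord, ← lift_two_power, Cardinal.lift_le]
  obtain ⟨e⟩ := hle
  let X (i : Ordinal.{u}) : Set Ordinal.{u} := {a | ∃ ha : a < κ.ord, i ∈ (e ⟨a, ha⟩).1}
  have hX : #(X '' Iio ν.ord) ≤ Cardinal.lift.{u + 1} κ :=
    mk_image_le.trans (mk_Iio_lt_lift_iff.2 hνκ).le
  obtain ⟨F, hF, hconst⟩ := h.exists_filter_eventuallyConst _ hX
  have := hF.neBot
  obtain ⟨a, hagree, haκ⟩ := ((hF.eventually_eventually_agree hνκ fun i hi =>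
    hconst _ (mem_image_of_mem X hi)).and hF.eventually_lt).exists
  obtain ⟨b, hab, hbκ, hlt⟩ :=
    (hagree.and (hF.eventually_lt.and (hF.eventually_gt haκ))).exists
  have heq : e ⟨a, haκ⟩ = e ⟨b, hbκ⟩ := by
    refine Subtype.ext (Set.ext fun i => ⟨fun hi => ?_, fun hi => ?_⟩)
    · exact ((hab i ((e _).2 hi)).1 ⟨haκ, hi⟩).2
    · exact ((hab i ((e _).2 hi)).2 ⟨hbκ, hi⟩).2
  exact hlt.ne (congrArg Subtype.val (e.injective heq))

end IsWeaklyCompactCard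

/-- The filter `F` presses `f` down: on the set of ordinals where it is regressive, `f` is
eventually constant with value below `κ`. This is the instance at `f` of Fodor's lemma for `F`. -/
def PressesDown (κ : Cardinal.{u}) (F : Filter Ordinal.{u}) (f : Ordinal.{u} → Ordinal.{u}) :
    Prop :=
  ∃ c < κ.ord, ∀ᶠ a in F, f a < a → f a = c

/-- The composition of a word of functions, each of them replaced by `0` where it is not
regressive. These compositions are closed under the given functions and bounded by the identity,
so that a least unbounded one among them leads to a filter pressing down the given functions. -/
noncomputable def regressiveComp (l : List (Ordinal.{u} → Ordinal.{u})) (a : Ordinal.{u}) :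
    Ordinal.{u} :=
  l.foldr (fun f b => if f b < b then f b else 0) a

theorem regressiveComp_le (l : List (Ordinal.{u} → Ordinal.{u})) (a : Ordinal.{u}) :
    regressiveComp l a ≤ a := by
  induction l with
  | nil => exact le_rfl
  | cons f l ih =>
    rw [regressiveComp, List.foldr_cons]
    split_ifs with hlt
    · exact hlt.le.trans ih
    · exact zero_le

theorem regressiveComp_cons_of_lt {f : Ordinal.{u} → Ordinal.{u}}
    {l : List (Ordinal.{u} → Ordinal.{u})} {a : Ordinal.{u}}
    (hf : f (regressiveComp l a) < regressiveComp l a) :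
    regressiveComp (f :: l) a = f (regressiveComp l a) :=
  if_pos hf

theorem regressiveComp_cons_lt (f : Ordinal.{u} → Ordinal.{u})
    {l : List (Ordinal.{u} → Ordinal.{u})} {a : Ordinal.{u}} (ha : 0 < regressiveComp l a) :
    regressiveComp (f :: l) a < regressiveComp l a := by
  rw [regressiveComp, List.foldr_cons]
  split_ifs with hlt
  · exact hlt
  · exact ha

namespace IsWeaklyCompactCard

variable {κ : Cardinal.{u}}

theorem exists_filter_tendsto_minimal (h : IsWeaklyCompactCard κ)
    {W : Set (Ordinal.{u} → Ordinal.{u})} (hW : #W ≤ Cardinal.lift.{u + 1} κ) (hid : id ∈ W)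
    (hle : ∀ g ∈ W, ∀ a, g a ≤ a) :
    ∃ F, IsCompleteUniform κ F ∧ ∃ g ∈ W, Tendsto g F (𝓝[<] κ.ord) ∧
      ∀ g' ∈ W, (∀ᶠ a in F, g' a < g a) → ∃ c < κ.ord, ∀ᶠ a in F, g' a = c := by
  have hfibers : #(image2 (fun g d => g ⁻¹' {d}) W (Iio κ.ord)) ≤ Cardinal.lift.{u + 1} κ := by
    refine mk_image2_le.trans ?_
    rw [mk_Iio_ord]
    exact mul_le_of_le (aleph0_le_lift.2 h.1.le) hW le_rfl
  obtain ⟨F, hF, hconst⟩ := h.exists_filter_eventuallyConst _ hfibers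
  have := hF.neBot
  have := hF.cardinalInterFilter
  have : CountableInterFilter F :=
    CardinalInterFilter.toCountableInterFilter F (aleph0_lt_lift.2 h.1)
  obtain ⟨g, ⟨hgW, hg⟩, hmin⟩ := (wellFounded_eventually_lt F).has_min
    {g | g ∈ W ∧ Tendsto g F (𝓝[<] κ.ord)} ⟨id, hid, hF.le_nhdsLT⟩
  refine ⟨F, hF, g, hgW, hg, fun g' hg'W hlt => ?_⟩
  have hg'κ := hF.eventually_lt.mono fun a ha => (hle g' hg'W a).trans_lt ha
  have hg'fibers : ∀ d < κ.ord, EventuallyConst (g' ⁻¹' {d}) F := fun d hd =>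
    hconst _ (mem_image2_of_mem hg'W hd)
  exact (hF.eventuallyEq_or_tendsto hg'κ hg'fibers).resolve_right fun hg' =>
    hmin g' ⟨hg'W, hg'⟩ hlt

theorem exists_filter_pressesDown (h : IsWeaklyCompactCard κ)
    (𝓕 : Set (Ordinal.{u} → Ordinal.{u})) (h𝓕 : #𝓕 ≤ Cardinal.lift.{u + 1} κ) :
    ∃ F, IsCompleteUniform κ F ∧ ∀ f ∈ 𝓕, PressesDown κ F f := by
  let W := range fun l : List 𝓕 => regressiveComp (l.map Subtype.val)
  have hW : #W ≤ Cardinal.lift.{u + 1} κ :=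
    mk_range_le.trans ((mk_list_le_max 𝓕).trans (max_le (aleph0_le_lift.2 h.1.le) h𝓕))
  obtain ⟨F, hF, _, ⟨l, rfl⟩, hg, hmin⟩ := h.exists_filter_tendsto_minimal hW ⟨[], rfl⟩
    (forall_mem_range.2 fun l => regressiveComp_le _)
  refine ⟨_, hF.map hg, fun f hf => ?_⟩
  have hpos := eventually_map.1 ((hF.map hg).eventually_gt hF.ord_pos)
  obtain ⟨c, hc, hconst⟩ := hmin _ ⟨⟨f, hf⟩ :: l, rfl⟩
    (hpos.mono fun a ha => regressiveComp_cons_lt f ha)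
  exact ⟨c, hc, eventually_map.2
    (hconst.mono fun a ha hfa => (regressiveComp_cons_of_lt hfa).symm.trans ha)⟩

end IsWeaklyCompactCard

/-- The least ordinal at which `h` reaches `a`, with junk value `0` if there is none. It is
less than `a` if `a` is not closed under `h`. -/
noncomputable def firstReach (h : Ordinal.{u} → Ordinal.{u}) (a : Ordinal.{u}) : Ordinal.{u} :=
  sInf {ν | a ≤ h ν}

/-- The least element of `C` above `θ`, with junk value `0` if there is none. -/
noncomputable def nextMem (C : Set Ordinal.{u}) (θ : Ordinal.{u}) : Ordinal.{u} :=
  sInf (C ∩ Ioi θ)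

namespace IsClubIn

variable {C : Set Ordinal.{u}} {κ θ : Ordinal.{u}}

theorem nextMem_mem (hC : IsClubIn C κ) (hθ : θ < κ) : nextMem C θ ∈ C ∩ Ioi θ :=
  csInf_mem (hC.2.1 θ hθ)

theorem mem_of_mapsTo_nextMem {δ : Ordinal.{u}} (hC : IsClubIn C κ) (hδ : 0 < δ) (hδκ : δ < κ)
    (hmaps : MapsTo (nextMem C) (Iio δ) (Iio δ)) : δ ∈ C :=
  hC.2.2 δ hδ hδκ fun θ hθ =>
    have hnext := hC.nextMem_mem (hθ.trans hδκ)
    ⟨nextMem C θ, hnext.1, hnext.2, hmaps hθ⟩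

end IsClubIn

theorem isClubIn_Iio {a : Ordinal.{u}} (ha : IsSuccLimit a) : IsClubIn (Iio a) a :=
  ⟨Subset.rfl, fun θ hθ => ⟨succ θ, ha.succ_lt hθ, lt_succ θ⟩, fun _ _ hδ _ => hδ⟩

theorem exists_isClubIn_isStationaryIn_of_inter_nonempty (S : Set Ordinal.{u}) {a : Ordinal.{u}}
    (ha : IsSuccLimit a) :
    ∃ C, IsClubIn C a ∧ ((S ∩ C).Nonempty → IsStationaryIn S a) := by
  by_cases hS : IsStationaryIn S a
  · exact ⟨Iio a, isClubIn_Iio ha, fun _ => hS⟩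
  · rw [IsStationaryIn] at hS
    push Not at hS
    obtain ⟨C, hC, hSC⟩ := hS
    exact ⟨C, hC, fun hne => absurd hSC hne.ne_empty⟩

theorem exists_cofinal_lt_ord_cof (a : Ordinal.{u}) :
    ∃ c : Ordinal.{u} → Ordinal.{u}, (∀ ξ < a.cof.ord, c ξ < a) ∧
      ∀ θ < a, ∃ ξ < a.cof.ord, θ ≤ c ξ := by
  obtain ⟨f, hf⟩ := Ordinal.exists_isFundamentalSeq (o := a) rfl
  have hf_apply (ξ : Iio a.cof.ord) :
      Function.extend Subtype.val (fun ξ => (f ξ : Ordinal.{u})) 0 ξ = f ξ :=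
    Subtype.val_injective.extend_apply _ _ ξ
  refine ⟨_, fun ξ hξ => (hf_apply ⟨ξ, hξ⟩).trans_lt (f ⟨ξ, hξ⟩).2, fun θ hθ => ?_⟩
  obtain ⟨_, ⟨ξ, rfl⟩, hξ⟩ := hf.isCofinal_range ⟨θ, hθ⟩
  exact ⟨ξ, ξ.2, (Subtype.coe_le_coe.2 hξ).trans_eq (hf_apply ξ).symm⟩

theorem isInaccessible_cof {a : Ordinal.{u}} (hcof : a.cof.ord = a) (hω : Ordinal.omega0 < a)
    (hpow : MapsTo (fun ν : Ordinal.{u} => (2 ^ ν.card : Cardinal.{u}).ord) (Iio a) (Iio a)) :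
    a.cof.IsInaccessible where
  aleph0_lt := by rwa [← ord_lt_ord, ord_aleph0, hcof]
  le_cof_ord := by rw [hcof]
  isStrongPrelimit x hx := by
    have hxa : x.ord < a := hcof ▸ ord_lt_ord.2 hx
    have hlt : (2 ^ x.ord.card : Cardinal.{u}).ord < a := hpow hxa
    rwa [card_ord, ← hcof, ord_lt_ord] at hlt

namespace IsCompleteUniform

variable {κ : Cardinal.{u}} {F : Filter Ordinal.{u}}

theorem eventually_mapsTo_Iio (hF : IsCompleteUniform κ F) {h : Ordinal.{u} → Ordinal.{u}}
    (hmaps : MapsTo h (Iio κ.ord) (Iio κ.ord)) (hpress : PressesDown κ F (firstReach h)) :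
    ∀ᶠ a in F, MapsTo h (Iio a) (Iio a) := by
  obtain ⟨c, hc, hconst⟩ := hpress
  filter_upwards [hconst, hF.eventually_gt (hmaps hc)] with a ha hca ν hν
  by_contra hνa
  have hreach : a ≤ h ν := not_lt.1 hνa
  have hmem : a ≤ h (firstReach h a) := csInf_mem (s := {ν | a ≤ h ν}) ⟨ν, hreach⟩
  have hlt : firstReach h a < a := (csInf_le' (s := {ν | a ≤ h ν}) hreach).trans_lt hν
  have hac : a ≤ h c := ha hlt ▸ hmem
  exact hac.not_gt hca

theorem eventually_mem_of_isClubIn (hF : IsCompleteUniform κ F) {D : Set Ordinal.{u}}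
    (hD : IsClubIn D κ.ord) (hpress : PressesDown κ F (firstReach (nextMem D))) :
    ∀ᶠ a in F, a ∈ D := by
  have hmaps : MapsTo (nextMem D) (Iio κ.ord) (Iio κ.ord) := fun θ hθ =>
    hD.1 (hD.nextMem_mem hθ).1
  filter_upwards [hF.eventually_mapsTo_Iio hmaps hpress, hF.eventually_lt,
    hF.eventually_gt hF.ord_pos] with a hmapsa haκ ha
  exact hD.mem_of_mapsTo_nextMem ha haκ hmapsa

theorem eventually_ord_cof_eq (hF : IsCompleteUniform κ F)
    {c : Ordinal.{u} → Ordinal.{u} → Ordinal.{u}} (hlt : ∀ a, ∀ ξ < a.cof.ord, c a ξ < a)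
    (hcof : ∀ a, ∀ θ < a, ∃ ξ < a.cof.ord, θ ≤ c a ξ)
    (hpress : PressesDown κ F fun a => a.cof.ord)
    (hpressc : ∀ ξ < κ.ord, PressesDown κ F fun a => c a ξ) :
    ∀ᶠ a in F, a.cof.ord = a := by
  obtain ⟨γ, hγ, hconst⟩ := hpress
  choose! d _hdκ hd using hpressc
  by_contra hreg
  have hsing : ∃ᶠ a in F, a < κ.ord ∧ a.cof.ord = γ ∧ ∀ ξ < γ, c a ξ = d ξ := by
    have hdγ := hF.eventually_forall_lt hγ fun ξ hξ => hd ξ (hξ.trans hγ)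
    refine (not_eventually.1 hreg).mp ?_
    filter_upwards [hF.eventually_lt, hconst, hdγ] with a haκ hca hda hne
    have hγa : a.cof.ord = γ := hca ((Ordinal.ord_cof_le a).lt_of_ne hne)
    exact ⟨haκ, hγa, fun ξ hξ => hda ξ hξ (hlt a ξ (hγa ▸ hξ))⟩
  obtain ⟨a, haκ, hγa, hda⟩ := hsing.exists
  obtain ⟨b, ⟨-, hγb, hdb⟩, hab⟩ := (hsing.and_eventually (hF.eventually_gt haκ)).exists
  obtain ⟨ξ, hξ, hle⟩ := hcof b a hab
  rw [hγb] at hξ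
  rw [hdb ξ hξ, ← hda ξ hξ] at hle
  exact hle.not_gt (hlt a ξ (hγa ▸ hξ))

theorem isClubIn_setOf_eventually_mem (hF : IsCompleteUniform κ F)
    {C : Ordinal.{u} → Set Ordinal.{u}} (hC : ∀ᶠ a in F, IsClubIn (C a) a)
    (hpress : ∀ θ < κ.ord, PressesDown κ F fun a => nextMem (C a) θ) :
    IsClubIn {ξ | ξ < κ.ord ∧ ∀ᶠ a in F, ξ ∈ C a} κ.ord := by
  have := hF.neBot
  refine ⟨fun ξ hξ => hξ.1, fun θ hθ => ?_, fun δ hδ hδκ hlim => ⟨hδκ, ?_⟩⟩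
  · obtain ⟨c, hc, hconst⟩ := hpress θ hθ
    have hmem : ∀ᶠ a in F, c ∈ C a ∩ Ioi θ := by
      filter_upwards [hC, hconst, hF.eventually_gt hθ] with a hCa hca hθa
      have hnext := hCa.nextMem_mem hθa
      rwa [hca (hCa.1 hnext.1)] at hnext
    obtain ⟨_, -, hθc⟩ := hmem.exists
    exact ⟨c, ⟨hc, hmem.mono fun a ha => ha.1⟩, hθc⟩
  · choose! γ hγ hθγ hγδ using hlim
    have hev := hF.eventually_forall_lt hδκ fun θ hθ => (hγ θ hθ).2
    filter_upwards [hC, hF.eventually_gt hδκ, hev] with a hCa hδa hγa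
    exact hCa.2.2 δ hδ hδa fun θ hθ => ⟨γ θ, hγa θ hθ, hθγ θ hθ, hγδ θ hθ⟩

theorem eventually_isStationaryIn (hF : IsCompleteUniform κ F) {S : Set Ordinal.{u}}
    (hS : IsStationaryIn S κ.ord) {C : Ordinal.{u} → Set Ordinal.{u}}
    (hC : ∀ᶠ a in F, IsClubIn (C a) a)
    (htest : ∀ᶠ a in F, (S ∩ C a).Nonempty → IsStationaryIn S a)
    (hpress : ∀ θ < κ.ord, PressesDown κ F fun a => nextMem (C a) θ) :
    ∀ᶠ a in F, IsStationaryIn S a := by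
  obtain ⟨ξ, hξS, -, hξ⟩ := hS _ (hF.isClubIn_setOf_eventually_mem hC hpress)
  filter_upwards [htest, hξ] with a ha hξa using ha ⟨ξ, hξS, hξa⟩

end IsCompleteUniform

namespace IsWeaklyCompactCard

variable {κ : Cardinal.{u}}

theorem mapsTo_ord_two_power (h : IsWeaklyCompactCard κ) :
    MapsTo (fun ν : Ordinal.{u} => (2 ^ ν.card : Cardinal.{u}).ord) (Iio κ.ord) (Iio κ.ord) :=
  fun _ hν => ord_lt_ord.2 (h.two_power_lt (lt_ord.1 hν))

theorem exists_filter_eventually_isInaccessible (h : IsWeaklyCompactCard κ)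
    (𝓕 : Set (Ordinal.{u} → Ordinal.{u})) (h𝓕 : #𝓕 ≤ Cardinal.lift.{u + 1} κ) :
    ∃ F, IsCompleteUniform κ F ∧ (∀ f ∈ 𝓕, PressesDown κ F f) ∧
      ∀ᶠ a in F, a.cof.ord = a ∧ a.cof.IsInaccessible := by
  choose c hlt hcof using exists_cofinal_lt_ord_cof
  let pow : Ordinal.{u} → Ordinal.{u} := fun ν => (2 ^ ν.card : Cardinal.{u}).ord
  let 𝓖 : Set (Ordinal.{u} → Ordinal.{u}) :=
    {firstReach pow, fun a => a.cof.ord} ∪ (fun ξ a => c a ξ) '' Iio κ.ord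
  have hκ : ℵ₀ ≤ Cardinal.lift.{u + 1} κ := aleph0_le_lift.2 h.1.le
  have h𝓖 : #𝓖 ≤ Cardinal.lift.{u + 1} κ := by
    refine (mk_union_le _ _).trans (add_le_of_le hκ ?_ (mk_image_le.trans (mk_Iio_ord κ).le))
    exact (Set.toFinite _).lt_aleph0.le.trans hκ
  obtain ⟨F, hF, hpress⟩ := h.exists_filter_pressesDown (𝓕 ∪ 𝓖)
    ((mk_union_le _ _).trans (add_le_of_le hκ h𝓕 h𝓖))
  refine ⟨F, hF, fun f hf => hpress f (.inl hf), ?_⟩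
  have hreg := hF.eventually_ord_cof_eq hlt hcof (hpress _ (by simp [𝓖]))
    fun ξ hξ => hpress _ (.inr (.inr (mem_image_of_mem _ hξ)))
  have hpow := hF.eventually_mapsTo_Iio h.mapsTo_ord_two_power (hpress _ (by simp [𝓖, pow]))
  have hω : Ordinal.omega0 < κ.ord := ord_aleph0 ▸ ord_lt_ord.2 h.1
  filter_upwards [hreg, hpow, hF.eventually_gt hω] with a hrega hpowa hωa
  exact ⟨hrega, isInaccessible_cof hrega hωa hpowa⟩

theorem exists_isInaccessible_forall_isStationaryIn (h : IsWeaklyCompactCard κ)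
    {𝓢 : Set (Set Ordinal.{u})} (h𝓢 : #𝓢 < Cardinal.lift.{u + 1} κ)
    (hstat : ∀ S ∈ 𝓢, IsStationaryIn S κ.ord) {D : Set Ordinal.{u}} (hD : IsClubIn D κ.ord) :
    ∃ μ : Cardinal.{u}, μ.IsInaccessible ∧ μ.ord ∈ D ∧ ∀ S ∈ 𝓢, IsStationaryIn S μ.ord := by
  choose! C hC htest using fun S a => exists_isClubIn_isStationaryIn_of_inter_nonempty S (a := a)
  let 𝓕 : Set (Ordinal.{u} → Ordinal.{u}) :=
    insert (firstReach (nextMem D)) (image2 (fun S θ a => nextMem (C S a) θ) 𝓢 (Iio κ.ord))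
  have hκ : ℵ₀ ≤ Cardinal.lift.{u + 1} κ := aleph0_le_lift.2 h.1.le
  have h𝓕 : #𝓕 ≤ Cardinal.lift.{u + 1} κ := by
    refine mk_insert_le.trans (add_le_of_le hκ (mk_image2_le.trans ?_) (one_le_aleph0.trans hκ))
    exact mul_le_of_le hκ h𝓢.le (mk_Iio_ord κ).le
  obtain ⟨F, hF, hpress, hinacc⟩ := h.exists_filter_eventually_isInaccessible 𝓕 h𝓕
  have hmem := hF.eventually_mem_of_isClubIn hD (hpress _ (mem_insert _ _))
  have hlim : ∀ᶠ a in F, IsSuccLimit a := hinacc.mono fun a ha =>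
    ha.1 ▸ Cardinal.isSuccLimit_ord ha.2.aleph0_lt.le
  have hstatF : ∀ᶠ a in F, ∀ S ∈ 𝓢, IsStationaryIn S a := by
    have := hF.cardinalInterFilter
    refine (eventually_cardinal_ball h𝓢).2 fun S hS => hF.eventually_isStationaryIn (hstat S hS)
      (hlim.mono fun a => hC S a) (hlim.mono fun a => htest S a) fun θ hθ => ?_
    exact hpress _ (mem_insert_of_mem _ (mem_image2_of_mem hS hθ))
  have := hF.neBot
  obtain ⟨a, ⟨hcof, hinacca⟩, haD, hSa⟩ := (hinacc.and (hmem.and hstatF)).exists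
  exact ⟨a.cof, hinacca, hcof.symm ▸ haD, hcof.symm ▸ hSa⟩

theorem isMahlo (h : IsWeaklyCompactCard κ) : IsMahlo κ := fun D hD => by
  obtain ⟨μ, hμ, hμD, -⟩ := h.exists_isInaccessible_forall_isStationaryIn (𝓢 := ∅)
    (by simpa using (aleph0_pos.trans h.1)) (by simp) hD
  exact ⟨μ.ord, ⟨μ, hμ, rfl⟩, hμD⟩

theorem isStationaryIn_alphaMahlo (h : IsWeaklyCompactCard κ) {β : Ordinal.{u}} (hβ : β < κ.ord)
    (hβκ : AlphaMahlo β κ) :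
    IsStationaryIn {γ | ∃ μ : Cardinal.{u}, AlphaMahlo β μ ∧ μ.ord = γ} κ.ord := by
  intro D hD
  rw [AlphaMahlo] at hβκ
  let S (η : Ordinal.{u}) : Set Ordinal.{u} := {γ | ∃ μ : Cardinal.{u}, AlphaMahlo η μ ∧ μ.ord = γ}
  let I : Set Ordinal.{u} := {γ | ∃ μ : Cardinal.{u}, μ.IsInaccessible ∧ μ.ord = γ}
  have hcard : #(insert I (S '' Iio β) : Set (Set Ordinal.{u})) < Cardinal.lift.{u + 1} κ := by
    have hκ : ℵ₀ ≤ Cardinal.lift.{u + 1} κ := aleph0_le_lift.2 h.1.le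
    refine mk_insert_le.trans_lt (add_lt_of_lt hκ ?_ (one_lt_aleph0.trans_le hκ))
    exact mk_image_le.trans_lt (mk_Iio_lt_lift_iff.2 hβ)
  obtain ⟨μ, -, hμD, hμ⟩ := h.exists_isInaccessible_forall_isStationaryIn hcard
    (forall_mem_insert.2 ⟨hβκ.1, forall_mem_image.2 hβκ.2⟩) hD
  refine ⟨μ.ord, ⟨μ, ?_, rfl⟩, hμD⟩
  rw [AlphaMahlo]
  exact ⟨hμ I (mem_insert _ _), fun η hη => hμ _ (mem_insert_of_mem _ (mem_image_of_mem S hη))⟩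

end IsWeaklyCompactCard

/-- If `κ` is a weakly compact cardinal, then `κ` is `α`-Mahlo for every
ordinal `α ≤ κ` (identifying `κ` with its initial ordinal). -/
theorem alphaMahlo_of_weaklyCompact {κ : Cardinal}
    (h : IsWeaklyCompactCard κ) : ∀ α ≤ κ.ord, AlphaMahlo α κ := by
  intro α
  induction α using WellFoundedLT.induction with
  | _ α ih =>
    intro hα
    rw [AlphaMahlo]
    refine ⟨h.isMahlo, fun β hβ => ?_⟩
    exact h.isStationaryIn_alphaMahlo (hβ.trans_le hα) (ih β hβ (hβ.le.trans hα))
end
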